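/- Let r > 0 be a real number, q ∈ (0,1), c > 0, and define p_t(x,z) as the transition kernel p_Θ with parameter Θ = Θ_t = (1-q)/(e^{ct}-q). Then for every natural number i ≥ 1, p_t(i, i-1)/t → c·i/(1-q) as t → 0⁺; that is, the infinitesimal death rate from state i is μ_i = c i/(1-q). -/

import Mathlib

open Filter Topology

/-- Transition kernel p_Θ(x, z) = ∑_{y=0}^{min(x,z)}
    Γ(z+r)/((z-y)! Γ(y+r)) · [q(1-Θ)]^{z-y} · [1-q(1-Θ)]^{r+y} · C(x,y) Θ^y (1-Θ)^{x-y}. -/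
noncomputable def pKer (r q Θ : ℝ) (x z : ℕ) : ℝ :=
  ∑ y ∈ Finset.range (min x z + 1),
    Real.Gamma ((z : ℝ) + r) / (((z - y).factorial : ℝ) * Real.Gamma ((y : ℝ) + r)) *
      (q * (1 - Θ)) ^ (z - y) * (1 - q * (1 - Θ)) ^ (r + (y : ℝ)) *
      (x.choose y : ℝ) * Θ ^ y * (1 - Θ) ^ (x - y)

/-!
For `z ≤ x` every summand of `p_Θ(x, z)` contains the factor `(1 - Θ) ^ (x - z)`, and at `Θ = 1`
what is left of the sum reduces to its term `y = z`, which is `C(x, z)`. Hence `Θ ↦ p_Θ(z + 1, z)`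
vanishes at `1` with derivative `-(z + 1)`. As `Θ_t` takes the value `1` at `t = 0`, with derivative
`-c / (1 - q)`, the chain rule gives the death rate.
-/

theorem hasDerivAt_sub_smul_of_continuousAt {𝕜 E : Type*} [NontriviallyNormedField 𝕜]
    [NormedAddCommGroup E] [NormedSpace 𝕜 E] {g : 𝕜 → E} {a : 𝕜} (hg : ContinuousAt g a) :
    HasDerivAt (fun x => (x - a) • g x) (g a) a := by
  refine hasDerivAt_iff_tendsto_slope.mpr ((hg.tendsto.mono_left nhdsWithin_le_nhds).congr' ?_)
  filter_upwards [self_mem_nhdsWithin] with x hx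
  exact (slope_sub_smul g (Ne.symm hx)).symm

/-- The cofactor of `(1 - Θ) ^ (x - z)` in the transition probability `pKer r q Θ x z` for
`z ≤ x`, as a function of `Θ`. -/
noncomputable def pKerCofactor (r q : ℝ) (x z : ℕ) (Θ : ℝ) : ℝ :=
  ∑ y ∈ Finset.range (z + 1),
    Real.Gamma ((z : ℝ) + r) / (((z - y).factorial : ℝ) * Real.Gamma ((y : ℝ) + r)) *
      (q * (1 - Θ)) ^ (z - y) * (1 - q * (1 - Θ)) ^ (r + (y : ℝ)) *
      (x.choose y : ℝ) * Θ ^ y * (1 - Θ) ^ (z - y)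

theorem pKer_eq_pow_mul_pKerCofactor (r q Θ : ℝ) {x z : ℕ} (hzx : z ≤ x) :
    pKer r q Θ x z = (1 - Θ) ^ (x - z) * pKerCofactor r q x z Θ := by
  rw [pKer, pKerCofactor, min_eq_right hzx, Finset.mul_sum]
  refine Finset.sum_congr rfl fun y hy => ?_
  have hyz : y ≤ z := Finset.mem_range_succ_iff.mp hy
  rw [← Nat.sub_add_sub_cancel hzx hyz, pow_add]
  ring

theorem continuousAt_pKerCofactor (r : ℝ) {q Θ : ℝ} (x z : ℕ) (hΘ : 1 - q * (1 - Θ) ≠ 0) :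
    ContinuousAt (pKerCofactor r q x z) Θ := by
  have hbase : ContinuousAt (fun Θ => 1 - q * (1 - Θ)) Θ := by fun_prop
  refine tendsto_finsetSum _ fun y _ => ?_
  refine .mul (.mul (.mul (.mul ?_ (hbase.rpow_const (Or.inl hΘ))) ?_) ?_) ?_
  all_goals exact Continuous.tendsto (by fun_prop) Θ

theorem pKerCofactor_one {r : ℝ} (q : ℝ) (x : ℕ) {z : ℕ} (hΓ : Real.Gamma (z + r) ≠ 0) :
    pKerCofactor r q x z 1 = x.choose z := by
  rw [pKerCofactor, Finset.sum_eq_single_of_mem z (Finset.self_mem_range_succ z)]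
  · simp [hΓ]
  · intro y hy hyz
    have hzy : z - y ≠ 0 :=
      Nat.sub_ne_zero_of_lt ((Finset.mem_range_succ_iff.mp hy).lt_of_ne hyz)
    simp [hzy]

theorem hasDerivAt_pKer_succ_self_one {r : ℝ} (q : ℝ) {z : ℕ} (hΓ : Real.Gamma (z + r) ≠ 0) :
    HasDerivAt (fun Θ => pKer r q Θ (z + 1) z) (-(z + 1)) 1 := by
  have hcont : ContinuousAt (fun Θ => -pKerCofactor r q (z + 1) z Θ) 1 :=
    (continuousAt_pKerCofactor r (z + 1) z (by simp)).neg
  have hfactor :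
      (fun Θ => pKer r q Θ (z + 1) z) = fun Θ => (Θ - 1) • -pKerCofactor r q (z + 1) z Θ := by
    ext Θ
    rw [pKer_eq_pow_mul_pKerCofactor r q Θ (Nat.le_add_right z 1), Nat.add_sub_cancel_left, pow_one,
      smul_eq_mul]
    ring
  rw [hfactor]
  refine (hasDerivAt_sub_smul_of_continuousAt hcont).congr_deriv ?_
  rw [pKerCofactor_one q (z + 1) hΓ, Nat.choose_succ_self_right, Nat.cast_succ]

theorem pKer_one_of_lt (r q : ℝ) {x z : ℕ} (hzx : z < x) : pKer r q 1 x z = 0 := by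
  rw [pKer_eq_pow_mul_pKerCofactor r q 1 hzx.le, sub_self, zero_pow (Nat.sub_ne_zero_of_lt hzx),
    zero_mul]

/-- The time-dependent dependence parameter `Θ_t`, at which `pKer` is evaluated to give `p_t`. -/
noncomputable def dependenceParam (q c t : ℝ) : ℝ :=
  (1 - q) / (Real.exp (c * t) - q)

theorem dependenceParam_zero {q : ℝ} (hq : q ≠ 1) (c : ℝ) : dependenceParam q c 0 = 1 := by
  rw [dependenceParam, mul_zero, Real.exp_zero, div_self (sub_ne_zero.mpr hq.symm)]

theorem hasDerivAt_dependenceParam_zero {q : ℝ} (hq : q ≠ 1) (c : ℝ) :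
    HasDerivAt (dependenceParam q c) (-(c / (1 - q))) 0 := by
  have hq' : 1 - q ≠ 0 := sub_ne_zero.mpr hq.symm
  have hden : HasDerivAt (fun t : ℝ => Real.exp (c * t) - q) c 0 := by
    simpa using (((hasDerivAt_id (0 : ℝ)).const_mul c).exp).sub_const q
  refine ((hasDerivAt_const 0 (1 - q)).fun_div hden (by simpa using hq')).congr_deriv ?_
  rw [mul_zero, Real.exp_zero]
  field_simp
  ring

theorem pKer_death_rate_general {r q : ℝ} (hr : ∀ m : ℕ, r ≠ -m) (hq : q ≠ 1) (c : ℝ)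
    {i : ℕ} (hi : 1 ≤ i) :
    Tendsto (fun t : ℝ => pKer r q ((1 - q) / (Real.exp (c * t) - q)) i (i - 1) / t)
      (𝓝[≠] 0) (𝓝 (c * i / (1 - q))) := by
  obtain ⟨z, rfl⟩ := Nat.exists_eq_add_of_le' hi
  have hΓ : Real.Gamma (z + r) ≠ 0 :=
    Real.Gamma_ne_zero fun m h => hr (m + z) (by push_cast; linarith)
  have hderiv : HasDerivAt (fun t => pKer r q (dependenceParam q c t) (z + 1) z)
      (-(z + 1) * -(c / (1 - q))) 0 :=
    (hasDerivAt_pKer_succ_self_one q hΓ).comp_of_eq 0 (hasDerivAt_dependenceParam_zero hq c)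
      (dependenceParam_zero hq c).symm
  have hzero : pKer r q (dependenceParam q c 0) (z + 1) z = 0 := by
    rw [dependenceParam_zero hq, pKer_one_of_lt r q z.lt_succ_self]
  convert hasDerivAt_iff_tendsto_slope.mp hderiv using 1
  · ext t
    rw [slope_def_field, hzero, sub_zero, sub_zero, dependenceParam, Nat.add_sub_cancel]
  · push_cast
    ring_nf

/-- Infinitesimal death rate: with Θ_t = (1-q)/(e^{ct}-q) and i ≥ 1,
    p_t(i, i-1)/t → c·i/(1-q) as t → 0⁺. -/
theorem pKer_death_rate
    (r q c : ℝ) (hr : 0 < r) (hq : q ∈ Set.Ioo (0 : ℝ) 1) (hc : 0 < c)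
    (i : ℕ) (hi : 1 ≤ i) :
    Tendsto (fun t : ℝ => pKer r q ((1 - q) / (Real.exp (c * t) - q)) i (i - 1) / t)
      (𝓝[>] (0 : ℝ)) (𝓝 (c * i / (1 - q))) := by
  have hr' (m : ℕ) : r ≠ -m := ((neg_nonpos.mpr m.cast_nonneg).trans_lt hr).ne'
  exact (pKer_death_rate_general hr' hq.2.ne c hi).mono_left (nhdsGT_le_nhdsNE 0)
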